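/- Let V be a type of variables and let t, u be terms in the free magma on V. If G1 satisfies the identity t ≐ u, i.e., for every assignment f : V → G1 the evaluations of t and u under f are equal, then the focals coincide: fc(t) = fc(u). -/

import Mathlib

/-- The three-element groupoid `G1` from the paper, on `{a,b,c}` encoded as
`{0,1,2}`: a*a=a, a*b=c, a*c=c, b*a=c, b*b=b, b*c=c, c*a=a, c*b=b, c*c=c. -/
def G1 : Type := Fin 3

def g1mul : Fin 3 → Fin 3 → Fin 3 := ![![0, 2, 2], ![2, 1, 2], ![0, 1, 2]]

instance : Mul G1 := ⟨g1mul⟩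

/-- The focal (rightmost variable) of a term in the free magma on `V`. -/
def focal {V : Type*} : FreeMagma V → V
  | .of x => x
  | .mul _ t₂ => focal t₂

/-! When an assignment takes its values in a set on which `x * y = y`, every term evaluates to the
value of its focal. The subset `{a, c}` of `G1` is such a set, and having two elements it separates
the focals of `t` and `u` as soon as they differ. -/

/-- A subset of a magma is right zero if the product of any two of its elements is the right-hand
factor. Under an assignment into such a subset, the value of a term depends only on its focal. -/
def IsRightZero {M : Type*} [Mul M] (s : Set M) : Prop :=
  ∀ ⦃x⦄, x ∈ s → ∀ ⦃y⦄, y ∈ s → x * y = y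

theorem IsRightZero.lift_eq_apply_focal {V M : Type*} [Mul M] {s : Set M} (hs : IsRightZero s)
    {f : V → M} (hf : ∀ v, f v ∈ s) (t : FreeMagma V) :
    FreeMagma.lift f t = f (focal t) := by
  induction t with
  | ih1 x => rfl
  | ih2 t u iht ihu =>
    rw [map_mul, iht, ihu]
    exact hs (hf (focal t)) (hf (focal u))

theorem stmt_17_general {V M : Type*} [Mul M] {s : Set M} (hs : IsRightZero s)
    (hs_nontrivial : s.Nontrivial) (t u : FreeMagma V)
    (h : ∀ f : V → M, FreeMagma.lift f t = FreeMagma.lift f u) :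
    focal t = focal u := by
  classical
  obtain ⟨a, ha, c, hc, hac⟩ := hs_nontrivial
  by_contra hne
  let f : V → M := fun v => if v = focal t then a else c
  have hf (v : V) : f v ∈ s := ite_mem.mpr ⟨fun _ => ha, fun _ => hc⟩
  apply hac
  calc
    a = f (focal t) := (if_pos rfl).symm
    _ = FreeMagma.lift f t := (hs.lift_eq_apply_focal hf t).symm
    _ = FreeMagma.lift f u := h f
    _ = f (focal u) := hs.lift_eq_apply_focal hf u
    _ = c := if_neg (Ne.symm hne)

namespace G1

/-- The subset `{a, c}` of `G1`, encoded as `{0, 2}`; it is the right zero subset used to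
separate focals. -/
def ac : Set G1 := {(0 : Fin 3), (2 : Fin 3)}

theorem isRightZero_ac : IsRightZero ac := by
  rintro x (rfl | rfl) y (rfl | rfl) <;> rfl

theorem nontrivial_ac : ac.Nontrivial :=
  Set.nontrivial_pair (show (0 : Fin 3) ≠ 2 by decide)

end G1

/-- If `G1` satisfies an identity `t ≐ u`, then `t` and `u` have the same
focal. -/
theorem stmt_17 {V : Type*} (t u : FreeMagma V)
    (h : ∀ f : V → G1, FreeMagma.lift f t = FreeMagma.lift f u) :
    focal t = focal u :=
  stmt_17_general G1.isRightZero_ac G1.nontrivial_ac t u h
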